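/- Let V and H be finite-dimensional complex vector spaces with dim V = q, let ψ : ⋀²V → H be a linear map, and let k ≥ 1 be an integer with 2k ≤ q. Suppose that every non-zero element of the kernel of ψ has rank bigger than 2k. Then for every integer r with 1 ≤ r ≤ k one has dim H ≥ 2rq − (2r+1 choose 2). -/

import Mathlib

open Module ExteriorAlgebra

/-- The wedge product of two vectors, as an element of the second exterior power `⋀²V`. -/
noncomputable def wedge {V : Type*} [AddCommGroup V] [Module ℂ V] (x y : V) : ⋀[ℂ]^2 V :=
  ⟨ExteriorAlgebra.ι ℂ x * ExteriorAlgebra.ι ℂ y, by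
    rw [show (⋀[ℂ]^2 V : Submodule ℂ (ExteriorAlgebra ℂ V))
        = (LinearMap.range (ExteriorAlgebra.ι ℂ : V →ₗ[ℂ] ExteriorAlgebra ℂ V)) ^ 2 from rfl,
      pow_two]
    exact Submodule.mul_mem_mul (LinearMap.mem_range_self _ x) (LinearMap.mem_range_self _ y)⟩

/-!
In a basis of `V`, the bivectors of rank at most `2r` are the alternating matrices of rank at most
`2r`. They form a cone of dimension `2rq - (2r+1 choose 2)`: the entries of the first `2r` rows
above the diagonal can be chosen arbitrarily, and the rest of a generic such matrix is determined by
them. By hypothesis the subspace `ker ψ`, which is cut out by `dim H` linear forms, meets this cone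
only in the origin, and on a cone of dimension `d` fewer than `d` linear forms always have a common
non-zero zero. For the last fact, the Nullstellensatz shows that the coordinate ring of the
cone is finite over the algebra generated by linear forms with no common non-zero zero, which
therefore has the same transcendence degree; that degree is at least `d`, because the `d` free
entries of the generic matrix are algebraically independent.
-/

section ProjectiveElimination

open MvPolynomial

attribute [local instance] MvPolynomial.gradedAlgebra

lemma homogeneousComponent_add_mul {σ R : Type*} [CommSemiring R] {l : MvPolynomial σ R} {j : ℕ}
    (hl : l.IsHomogeneous j) (p : MvPolynomial σ R) (n : ℕ) :
    homogeneousComponent (n + j) (p * l) = homogeneousComponent n p * l := by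
  have h := DirectSum.coe_decompose_mul_add_of_right_mem (homogeneousSubmodule σ R)
    (a := p) (i := n) ((mem_homogeneousSubmodule j l).2 hl)
  rwa [← decomposition.decompose'_apply, ← decomposition.decompose'_apply]

lemma exists_idealOfVars_pow_le_of_zeroLocus_subset {K σ : Type*} [Field K] [IsAlgClosed K]
    [Finite σ] {I : Ideal (MvPolynomial σ K)} (hI : zeroLocus K I ⊆ {0}) :
    ∃ D, idealOfVars σ K ^ D ≤ I := by
  have hrad : idealOfVars σ K ≤ I.radical := by
    rw [← vanishingIdeal_zeroLocus_eq_radical (K := K), idealOfVars, Ideal.span_le]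
    rintro _ ⟨i, rfl⟩
    rw [SetLike.mem_coe, mem_vanishingIdeal_iff]
    intro x hx
    simp [Set.mem_singleton_iff.1 (hI hx)]
  obtain ⟨D, hD⟩ := I.exists_radical_pow_le_of_fg (IsNoetherian.noetherian _)
  exact ⟨D, (Ideal.pow_right_mono hrad D).trans hD⟩

section Graded

variable {R σ ι : Type*} [CommRing R] {J : Ideal (MvPolynomial σ R)}
  {l : ι → MvPolynomial σ R}

lemma exists_isHomogeneous_sub_sum_mul_mem [Fintype ι]
    (hJ : J.IsHomogeneous (homogeneousSubmodule σ R)) (hl : ∀ i, (l i).IsHomogeneous 1) {n : ℕ}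
    {p : MvPolynomial σ R} (hp : p.IsHomogeneous (n + 1))
    (hmem : p ∈ J ⊔ Ideal.span (Set.range l)) :
    ∃ c : ι → MvPolynomial σ R, (∀ i, (c i).IsHomogeneous n) ∧ p - ∑ i, c i * l i ∈ J := by
  obtain ⟨a, ha, b, hb, rfl⟩ := Submodule.mem_sup.1 hmem
  obtain ⟨c, rfl⟩ := Ideal.mem_span_range_iff_exists_fun.1 hb
  refine ⟨fun i => homogeneousComponent n (c i),
    fun i => homogeneousComponent_isHomogeneous n (c i), ?_⟩
  have hcomp : homogeneousComponent (n + 1) (∑ i, c i * l i) =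
      ∑ i, homogeneousComponent n (c i) * l i := by
    rw [map_sum]
    exact Finset.sum_congr rfl fun i _ => homogeneousComponent_add_mul (hl i) (c i) n
  rw [← hcomp, ← homogeneousComponent_eq_self hp, map_add, add_sub_cancel_right]
  exact homogeneousComponent_mem_of_mem hJ ha (n + 1)

-- A form of degree at least `D` is, modulo `J`, a combination of the `l i` with coefficients of
-- smaller degree, so the images of the polynomials of degree at most `D` generate `A`.
lemma finite_adjoin_of_idealOfVars_pow_le [Finite σ] [Finite ι] {A : Type*} [CommRing A]
    [Algebra R A] (hJ : J.IsHomogeneous (homogeneousSubmodule σ R))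
    (hl : ∀ i, (l i).IsHomogeneous 1) {D : ℕ}
    (hD : idealOfVars σ R ^ D ≤ J ⊔ Ideal.span (Set.range l)) (φ : MvPolynomial σ R →ₐ[R] A)
    (hφ : Function.Surjective φ) (hJφ : J ≤ RingHom.ker φ) :
    Module.Finite (Algebra.adjoin R (Set.range (φ ∘ l))) A := by
  cases nonempty_fintype ι
  set B := Algebra.adjoin R (Set.range (φ ∘ l))
  have hfin : Module.Finite R (restrictTotalDegree σ R D) := inferInstance
  obtain ⟨s, hs⟩ := (Module.Finite.iff_fg.1 hfin).map φ.toLinearMap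
  have hlow : ∀ p : MvPolynomial σ R, p.totalDegree ≤ D → φ p ∈ Submodule.span B (s : Set A) := by
    intro p hp
    refine Submodule.span_le_restrictScalars R B _ ?_
    rw [hs]
    exact ⟨p, (mem_restrictTotalDegree σ D p).2 hp, rfl⟩
  have hform : ∀ n, ∀ p : MvPolynomial σ R, p.IsHomogeneous n →
      φ p ∈ Submodule.span B (s : Set A) := by
    intro n
    induction n with
    | zero => exact fun p hp => hlow p (hp.totalDegree_le.trans D.zero_le)
    | succ n ih =>
      intro p hp
      rcases le_or_gt (n + 1) D with hn | hn
      · exact hlow p (hp.totalDegree_le.trans hn)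
      have hpow : p ∈ idealOfVars σ R ^ D :=
        (mem_pow_idealOfVars_iff' D p).2 fun d hd => hp.coeff_eq_zero (hd.trans hn).ne
      obtain ⟨c, hc, hpc⟩ := exists_isHomogeneous_sub_sum_mul_mem hJ hl hp (hD hpow)
      have hsum : φ p = ∑ i, (⟨φ (l i), Algebra.subset_adjoin ⟨i, rfl⟩⟩ : B) • φ (c i) := by
        rw [← sub_eq_zero, ← hJφ hpc, map_sub, map_sum]
        simp only [map_mul, Subalgebra.smul_def, smul_eq_mul, mul_comm]
      rw [hsum]
      exact Submodule.sum_mem _ fun i _ => Submodule.smul_mem _ _ (ih (c i) (hc i))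
  refine ⟨⟨s, eq_top_iff.2 fun a _ => ?_⟩⟩
  obtain ⟨p, rfl⟩ := hφ a
  rw [← sum_homogeneousComponent p, map_sum]
  exact Submodule.sum_mem _ fun n _ => hform n _ (homogeneousComponent_isHomogeneous n p)

end Graded

section Dimension

variable {K σ τ A : Type*} [Field K] [IsAlgClosed K] [Finite σ] [Fintype τ] [CommRing A]
  [IsDomain A] [Algebra K A] {z : σ → A} {e : τ → σ}

open Cardinal in
lemma card_le_card_of_zeroLocus_subset {ι : Type*} [Fintype ι] {J : Ideal (MvPolynomial σ K)}
    (hJ : J.IsHomogeneous (homogeneousSubmodule σ K)) {l : ι → MvPolynomial σ K}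
    (hl : ∀ i, (l i).IsHomogeneous 1)
    (hzero : zeroLocus K (J ⊔ Ideal.span (Set.range l)) ⊆ {0})
    (hz : ∀ p ∈ J, aeval z p = 0) (he : AlgebraicIndependent K (z ∘ e)) :
    Fintype.card τ ≤ Fintype.card ι := by
  obtain ⟨D, hD⟩ := exists_idealOfVars_pow_le_of_zeroLocus_subset hzero
  let φ : MvPolynomial σ K →ₐ[K] (aeval z : MvPolynomial σ K →ₐ[K] A).range :=
    (aeval z).rangeRestrict
  have hfin := finite_adjoin_of_idealOfVars_pow_le hJ hl hD φ (aeval z).rangeRestrict_surjective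
    fun p hp => Subtype.ext (hz p hp)
  have hindep : AlgebraicIndependent K fun t => φ (X (e t)) := by
    refine AlgebraicIndependent.of_comp (Subalgebra.val _) ?_
    convert he
    ext t
    simp [φ]
  have hle := hindep.lift_cardinalMk_le_trdeg.trans <|
    lift_le.2 (Algebra.IsAlgebraic.trdeg_le_cardinalMk K (Set.range (φ ∘ l)))
  have hcard : Nat.card τ ≤ Nat.card (Set.range (φ ∘ l)) := by
    simpa only [toNat_lift, Nat.card] using toNat_le_toNat hle (by simp)
  simpa using hcard.trans (Finite.card_range_le _)

lemma card_le_finrank_of_forall_aeval_eq_zero {H : Type*} [AddCommGroup H] [Module K H]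
    [FiniteDimensional K H] {G : Set (MvPolynomial σ K)}
    (hG : ∀ g ∈ G, SetLike.IsHomogeneousElem (homogeneousSubmodule σ K) g)
    (L : (σ → K) →ₗ[K] H)
    (hzero : ∀ x : σ → K, (∀ g ∈ G, aeval x g = 0) → L x = 0 → x = 0)
    (hz : ∀ g ∈ G, aeval z g = 0) (he : AlgebraicIndependent K (z ∘ e)) :
    Fintype.card τ ≤ finrank K H := by
  classical
  cases nonempty_fintype σ
  let f := L.toMvPolynomial (Pi.basisFun K σ) (finBasis K H)
  have hker : Ideal.span G ≤ RingHom.ker (aeval z) := Ideal.span_le.2 hz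
  rw [← Fintype.card_fin (finrank K H)]
  refine card_le_card_of_zeroLocus_subset (Ideal.homogeneous_span _ _ hG) (l := f)
    (L.toMvPolynomial_isHomogeneous _ _) (fun x hx => ?_) hker he
  rw [mem_zeroLocus_iff] at hx
  refine hzero x (fun g hg => hx g (Ideal.mem_sup_left (Ideal.subset_span hg))) ?_
  refine (finBasis K H).repr.injective (Finsupp.ext fun i => ?_)
  have hxi := hx (f i) (Ideal.mem_sup_right (Ideal.subset_span ⟨i, rfl⟩))
  have hrepr := L.toMvPolynomial_eval_eq_apply (Pi.basisFun K σ) (finBasis K H) i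
    ((Pi.basisFun K σ).repr x)
  simpa using hrepr.symm.trans hxi

end Dimension

end ProjectiveElimination

section AlternatingMatrices

open Matrix

/-- A square matrix is alternating if it is the Gram matrix of an alternating bilinear form: it is
skew-symmetric with zero diagonal. The diagonal is a separate condition in characteristic two. -/
structure IsAltMatrix {n R : Type*} [AddGroup R] (S : Matrix n n R) : Prop where
  apply_self (a : n) : S a a = 0
  apply_swap (a b : n) : S b a = -S a b

/-- The coordinate matrix of the bivector `u ∧ v`. -/
def wedgeMatrix {n R : Type*} [Ring R] (u v : n → R) : Matrix n n R :=
  vecMulVec u v - vecMulVec v u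

lemma wedgeMatrix_apply {n R : Type*} [CommRing R] (u v : n → R) (a b : n) :
    wedgeMatrix u v a b = u a * v b - v a * u b := rfl

section Ring

variable {n p R : Type*} [CommRing R]

lemma wedgeMatrix_smul_left (t : R) (u v : n → R) :
    wedgeMatrix (t • u) v = t • wedgeMatrix u v := by
  ext a b
  simp only [wedgeMatrix_apply, Pi.smul_apply, Matrix.smul_apply, smul_eq_mul]
  ring

lemma isAltMatrix_wedgeMatrix (u v : n → R) : IsAltMatrix (wedgeMatrix u v) where
  apply_self a := by rw [wedgeMatrix_apply, mul_comm, sub_self]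
  apply_swap a b := by simp only [wedgeMatrix_apply]; ring

namespace IsAltMatrix

lemma sub_smul {S T : Matrix n n R} (hS : IsAltMatrix S) (hT : IsAltMatrix T) (t : R) :
    IsAltMatrix (S - t • T) where
  apply_self a := by simp [hS.apply_self, hT.apply_self]
  apply_swap a b := by
    simp only [Matrix.sub_apply, Matrix.smul_apply, hS.apply_swap a b, hT.apply_swap a b,
      smul_neg, neg_sub, sub_neg_eq_add]
    abel

lemma submatrix {A : Matrix p p R} (hA : IsAltMatrix A) (f : n → p) :
    IsAltMatrix (A.submatrix f f) where
  apply_self _ := hA.apply_self _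
  apply_swap _ _ := hA.apply_swap _ _

lemma map {R' : Type*} [CommRing R'] {A : Matrix n n R} (hA : IsAltMatrix A) (f : R →+* R') :
    IsAltMatrix (A.map f) where
  apply_self a := by simp [hA.apply_self]
  apply_swap a b := by simp [hA.apply_swap a b]

lemma transpose_mul_mul [Fintype p] {A : Matrix p p R} (hA : IsAltMatrix A) (N : Matrix p n R) :
    IsAltMatrix (Nᵀ * A * N) where
  apply_self c := by
    classical
    simp only [mul_apply, transpose_apply, Finset.sum_mul]
    rw [← Fintype.sum_prod_type']
    refine Finset.sum_involution (fun ab _ => ab.swap) (fun ab _ => ?_) (fun ab _ hne heq => hne ?_)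
      (fun _ _ => Finset.mem_univ _) (fun ab _ => ab.swap_swap)
    · rw [Prod.fst_swap, Prod.snd_swap, hA.apply_swap ab.1 ab.2]
      ring
    · rw [show ab.1 = ab.2 from congrArg Prod.snd heq, hA.apply_self]
      ring
  apply_swap c d := by
    have hT : (Nᵀ * A * N)ᵀ = -(Nᵀ * A * N) := by
      have hAT : Aᵀ = -A := by
        ext a b
        exact hA.apply_swap a b
      simp only [transpose_mul, transpose_transpose, hAT, Matrix.mul_assoc, Matrix.mul_neg,
        Matrix.neg_mul]
    exact congrFun₂ hT c d

end IsAltMatrix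

end Ring

section Rank

variable {m n K : Type*} [Field K] [Fintype n]

lemma exists_linearIndependent_col_of_le_rank [Finite m] (A : Matrix m n K) {s : ℕ}
    (hs : s ≤ A.rank) : ∃ g : Fin s → n, LinearIndependent K fun j => A.col (g j) := by
  rw [rank_eq_finrank_span_cols] at hs
  obtain ⟨f, hf, -, hli⟩ := Submodule.exists_fun_fin_finrank_span_eq K (Set.range A.col)
  choose g hg using hf
  refine ⟨fun j => g (Fin.castLE hs j), ?_⟩
  simp_rw [hg]
  exact hli.comp _ (Fin.castLE_injective hs)

lemma exists_submatrix_det_ne_zero_of_le_rank [Finite m] (A : Matrix m n K) {s : ℕ}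
    (hs : s ≤ A.rank) : ∃ (f : Fin s → m) (g : Fin s → n), (A.submatrix f g).det ≠ 0 := by
  cases nonempty_fintype m
  obtain ⟨g, hg⟩ := exists_linearIndependent_col_of_le_rank A hs
  have hrank : (A.submatrix id g)ᵀ.rank = s := by
    simpa using LinearIndependent.rank_matrix (M := (A.submatrix id g)ᵀ) hg
  obtain ⟨f, hf⟩ := exists_linearIndependent_col_of_le_rank (A.submatrix id g)ᵀ hrank.ge
  refine ⟨f, g, ?_⟩
  have hrows : LinearIndependent K (A.submatrix f g).row := hf
  rw [linearIndependent_rows_iff_isUnit, isUnit_iff_isUnit_det] at hrows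
  exact hrows.ne_zero

lemma finrank_add_finrank_le_of_map_eq_top {E E' : Type*} [AddCommGroup E] [Module K E]
    [AddCommGroup E'] [Module K E'] (f : E →ₗ[K] E') {U W : Submodule K E}
    [FiniteDimensional K W] (hUW : U ≤ W) (hU : U ≤ LinearMap.ker f) (hW : W.map f = ⊤) :
    finrank K U + finrank K E' ≤ finrank K W := by
  have hsum := (f.domRestrict W).finrank_range_add_finrank_ker
  rw [LinearMap.range_domRestrict, hW, finrank_top] at hsum
  have hle : U.submoduleOf W ≤ LinearMap.ker (f.domRestrict W) := fun x hx => hU hx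
  have hfin := Submodule.finrank_mono hle
  rw [(Submodule.submoduleOfEquivOfLe hUW).finrank_eq] at hfin
  lia

namespace IsAltMatrix

variable {S : Matrix n n K}

-- Every column of the new matrix lies in the column space of `S` and vanishes in the coordinates
-- `a` and `b`, whereas these coordinates take all values on the column space of `S`.
lemma rank_sub_smul_wedgeMatrix_add_two_le (hS : IsAltMatrix S) {a b : n} (hab : S a b ≠ 0) :
    (S - (S a b)⁻¹ • wedgeMatrix (S a) (S b)).rank + 2 ≤ S.rank := by
  classical
  set T := S - (S a b)⁻¹ • wedgeMatrix (S a) (S b) with hT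
  have hcol (c : n) : S.col c ∈ LinearMap.range S.mulVecLin := ⟨Pi.single c 1, by simp⟩
  have hTcol (d : n) :
      T.col d = S.col d + ((S a b)⁻¹ * S b d) • S.col a - ((S a b)⁻¹ * S a d) • S.col b := by
    ext c
    simp [hT, wedgeMatrix_apply, hS.apply_swap a c, hS.apply_swap b c]
    ring
  let π : (n → K) →ₗ[K] K × K := (LinearMap.proj a).prod (LinearMap.proj b)
  have hrange : LinearMap.range T.mulVecLin ≤ LinearMap.range S.mulVecLin := by
    rw [range_mulVecLin, Submodule.span_le]
    rintro _ ⟨d, rfl⟩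
    rw [SetLike.mem_coe, hTcol]
    exact sub_mem (add_mem (hcol d) (Submodule.smul_mem _ _ (hcol a)))
      (Submodule.smul_mem _ _ (hcol b))
  have hker : LinearMap.range T.mulVecLin ≤ LinearMap.ker π := by
    rw [range_mulVecLin, Submodule.span_le]
    rintro _ ⟨d, rfl⟩
    simp [π, hTcol, hS.apply_self, hS.apply_swap a b, mul_right_comm _ _ (S a b), hab]
  have hsurj : (LinearMap.range S.mulVecLin).map π = ⊤ := by
    refine eq_top_iff.2 fun ⟨x, y⟩ _ => ⟨(x * (S a b)⁻¹) • S.col b - (y * (S a b)⁻¹) • S.col a,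
      sub_mem (Submodule.smul_mem _ _ (hcol b)) (Submodule.smul_mem _ _ (hcol a)), ?_⟩
    simp [π, hS.apply_self, hS.apply_swap a b, hab]
  simpa [rank] using finrank_add_finrank_le_of_map_eq_top π hrange hker hsurj

lemma exists_eq_sum_wedgeMatrix (hS : IsAltMatrix S) {k : ℕ} (hk : S.rank ≤ 2 * k) :
    ∃ u v : Fin k → n → K, S = ∑ i, wedgeMatrix (u i) (v i) := by
  induction k generalizing S with
  | zero => 
    refine ⟨0, 0, Matrix.ext fun a b => by_contra fun hab => ?_⟩
    have hrank := hS.rank_sub_smul_wedgeMatrix_add_two_le (a := a) (b := b) (by simpa using hab)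
    lia
  | succ k ih =>
    rcases eq_or_ne S 0 with rfl | hne
    · exact ⟨0, 0, by simp [wedgeMatrix]⟩
    obtain ⟨a, b, hab⟩ : ∃ a b, S a b ≠ 0 := by
      by_contra! h
      exact hne (Matrix.ext h)
    have hrank := hS.rank_sub_smul_wedgeMatrix_add_two_le hab
    obtain ⟨u, v, huv⟩ := ih (hS.sub_smul (isAltMatrix_wedgeMatrix (S a) (S b)) (S a b)⁻¹) (by lia)
    refine ⟨Fin.cons ((S a b)⁻¹ • S a) u, Fin.cons (S b) v, ?_⟩
    simp [Fin.sum_univ_succ, ← huv, wedgeMatrix_smul_left]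

lemma exists_extension {p : Type*} [Fintype p] [DecidableEq p] {A : Matrix p p K}
    (hA : IsAltMatrix A) (hdet : A.det ≠ 0) (Y : Matrix p n K) :
    ∃ W : Matrix (p ⊕ n) (p ⊕ n) K,
      IsAltMatrix W ∧ W.rank ≤ Fintype.card p ∧ W.toRows₁ = fromCols A Y := by
  let N : Matrix p (p ⊕ n) K := fromCols 1 (A⁻¹ * Y)
  refine ⟨Nᵀ * A * N, hA.transpose_mul_mul N, ?_, ?_⟩
  · exact (rank_mul_le_right _ _).trans (rank_le_card_height _)
  · rw [Matrix.mul_assoc, mul_fromCols, Matrix.mul_one, mul_nonsing_inv_cancel_left _ _ hdet.isUnit,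
      transpose_fromCols, fromRows_mul, transpose_one, Matrix.one_mul, toRows₁_fromRows]

end IsAltMatrix

end Rank

section GenericPoint

/-- The alternating matrix with prescribed entries above the diagonal. -/
def altOfUpper {p R : Type*} [LinearOrder p] [AddGroup R] (f : {e : p × p // e.1 < e.2} → R) :
    Matrix p p R :=
  of fun a b => if h : a < b then f ⟨(a, b), h⟩ else if h : b < a then -f ⟨(b, a), h⟩ else 0

section AltOfUpper

variable {p R : Type*} [LinearOrder p]

lemma altOfUpper_apply_of_lt [AddGroup R] (f : {e : p × p // e.1 < e.2} → R) {a b : p}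
    (hab : a < b) : altOfUpper f a b = f ⟨(a, b), hab⟩ := by
  simp [altOfUpper, hab]

lemma isAltMatrix_altOfUpper [AddGroup R] (f : {e : p × p // e.1 < e.2} → R) :
    IsAltMatrix (altOfUpper f) where
  apply_self a := by simp [altOfUpper]
  apply_swap a b := by
    rcases lt_trichotomy a b with h | rfl | h
    · simp [altOfUpper, h, h.not_gt]
    · simp [altOfUpper]
    · simp [altOfUpper, h, h.not_gt]

lemma IsAltMatrix.altOfUpper_eq [AddGroup R] {S : Matrix p p R} (hS : IsAltMatrix S) :
    altOfUpper (fun e => S e.1.1 e.1.2) = S := by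
  ext a b
  rcases lt_trichotomy a b with h | rfl | h
  · simp [altOfUpper, h]
  · simp [altOfUpper, hS.apply_self]
  · simp [altOfUpper, h, h.not_gt, hS.apply_swap b a]

open MvPolynomial in
lemma aeval_det_altOfUpper_X {F : Type*} [CommRing R] [CommRing F] [Algebra R F] [Fintype p]
    (f : {e : p × p // e.1 < e.2} → F) :
    aeval f (altOfUpper (X : _ → MvPolynomial {e : p × p // e.1 < e.2} R)).det =
      (altOfUpper f).det := by
  rw [AlgHom.map_det]
  congr 1
  ext a b
  simp only [AlgHom.mapMatrix_apply, map_apply, altOfUpper, of_apply]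
  split_ifs <;> simp

end AltOfUpper

lemma exists_isAltMatrix_det_ne_zero (R : Type*) [CommRing R] [Nontrivial R] (r : ℕ) :
    ∃ S : Matrix (Fin (2 * r)) (Fin (2 * r)) R, IsAltMatrix S ∧ S.det ≠ 0 := by
  have hJ : IsAltMatrix (J (Fin r) R) := by
    constructor
    · rintro (_ | _) <;> simp [J]
    · exact fun a b => congrFun₂ (J_transpose (Fin r) R) a b
  let e : Fin (2 * r) ≃ Fin r ⊕ Fin r := (finCongr (two_mul r)).trans finSumFinEquiv.symm
  refine ⟨(J (Fin r) R).submatrix e e, hJ.submatrix e, ?_⟩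
  rw [det_submatrix_equiv_self]
  exact (isUnit_det_J (Fin r) R).ne_zero

lemma det_altOfUpper_ne_zero {R F : Type*} [CommRing R] [Nontrivial R] [CommRing F] [Algebra R F]
    {r : ℕ} {t : {e : Fin (2 * r) × Fin (2 * r) // e.1 < e.2} → F}
    (ht : AlgebraicIndependent R t) : (altOfUpper t).det ≠ 0 := by
  obtain ⟨S, hS, hdet⟩ := exists_isAltMatrix_det_ne_zero R r
  rw [← hS.altOfUpper_eq, ← aeval_det_altOfUpper_X (R := R)] at hdet
  rw [← aeval_det_altOfUpper_X (R := R)]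
  intro h
  exact hdet (by rw [ht (h.trans (map_zero _).symm), map_zero])

/-- The positions of the entries that can be chosen freely in an alternating matrix of size `2r + m`
and rank at most `2r`: those of the first `2r` rows above the diagonal. -/
abbrev FreeEntry (r m : ℕ) : Type :=
  {e : Fin (2 * r) × Fin (2 * r) // e.1 < e.2} ⊕ Fin (2 * r) × Fin m

lemma card_freeEntry (r m : ℕ) :
    Fintype.card (FreeEntry r m) = (2 * r).choose 2 + 2 * r * m := by
  have h : Fintype.card {e : Fin (2 * r) × Fin (2 * r) // e.1 < e.2} = (2 * r).choose 2 := by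
    let f : {e : Fin (2 * r) × Fin (2 * r) // e.1 < e.2} ≃ Σ b : Fin (2 * r), Fin b :=
      { toFun e := ⟨e.1.2, e.1.1, e.2⟩
        invFun e := ⟨(⟨e.2, e.2.2.trans e.1.2⟩, e.1), e.2.2⟩ }
    rw [Fintype.card_congr f, Fintype.card_sigma]
    simp [Fin.sum_univ_eq_sum_range fun i => i, Finset.sum_range_id, Nat.choose_two_right]
  simp [h]

/-- The row and column of a free entry. -/
def FreeEntry.pos {r m : ℕ} : FreeEntry r m → (Fin (2 * r) ⊕ Fin m) × (Fin (2 * r) ⊕ Fin m)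
  | .inl e => (.inl e.1.1, .inl e.1.2)
  | .inr e => (.inl e.1, .inr e.2)

lemma exists_isAltMatrix_of_algebraicIndependent {K F : Type*} [CommRing K] [Nontrivial K] [Field F]
    [Algebra K F] {r m : ℕ} {t : FreeEntry r m → F} (ht : AlgebraicIndependent K t) :
    ∃ W : Matrix (Fin (2 * r) ⊕ Fin m) (Fin (2 * r) ⊕ Fin m) F,
      IsAltMatrix W ∧ W.rank ≤ 2 * r ∧ ∀ e : FreeEntry r m, W e.pos.1 e.pos.2 = t e := by
  obtain ⟨W, hW, hrank, hrows⟩ := (isAltMatrix_altOfUpper (t ∘ Sum.inl)).exists_extension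
    (det_altOfUpper_ne_zero (ht.comp Sum.inl Sum.inl_injective)) (of fun a c => t (.inr (a, c)))
  refine ⟨W, hW, by simpa using hrank, ?_⟩
  rintro (⟨⟨a, b⟩, hab⟩ | ⟨a, c⟩)
  · exact (congrFun₂ hrows a (.inl b)).trans (altOfUpper_apply_of_lt _ hab)
  · exact congrFun₂ hrows a (.inr c)

end GenericPoint

section RankLocus

open MvPolynomial

/-- Equations for the cone of alternating `n × n` matrices of rank less than `s`: the vanishing of
the diagonal, skew-symmetry, and the vanishing of the minors of size `s`. -/
def altRankEquations (n R : Type*) [CommRing R] (s : ℕ) : Set (MvPolynomial (n × n) R) :=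
  Set.range (fun a : n => X (a, a)) ∪
    Set.range (fun e : n × n => X e + X e.swap) ∪
    Set.range fun fg : (Fin s → n) × (Fin s → n) =>
      ((of fun a b => X (a, b)).submatrix fg.1 fg.2).det

lemma isHomogeneousElem_of_mem_altRankEquations {n R : Type*} [CommRing R] {s : ℕ} :
    ∀ g ∈ altRankEquations n R s, SetLike.IsHomogeneousElem (homogeneousSubmodule (n × n) R) g := by
  rintro _ ((⟨a, rfl⟩ | ⟨e, rfl⟩) | ⟨fg, rfl⟩)
  · exact ⟨1, isHomogeneous_X _ _⟩
  · exact ⟨1, (isHomogeneous_X _ _).add (isHomogeneous_X _ _)⟩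
  · refine ⟨∑ _i : Fin s, 1, ?_⟩
    simp only [det_apply]
    exact sum_mem fun τ _ => zsmul_mem (IsHomogeneous.prod _ _ _ fun i _ => isHomogeneous_X _ _) _

lemma forall_aeval_altRankEquations_eq_zero_iff {n R F : Type*} [Fintype n] [CommRing R] [Field F]
    [Algebra R F] {s : ℕ} {x : n × n → F} :
    (∀ g ∈ altRankEquations n R s, aeval x g = 0) ↔
      IsAltMatrix (of x.curry) ∧ (of x.curry).rank < s := by
  have hminor (f g : Fin s → n) :
      aeval x ((of fun a b => (X (a, b) : MvPolynomial (n × n) R)).submatrix f g).det =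
        ((of x.curry).submatrix f g).det := by
    rw [AlgHom.map_det]
    congr 1
    ext i j
    simp
  constructor
  · refine fun h => ⟨⟨fun a => ?_, fun a b => ?_⟩, ?_⟩
    · simpa using h _ (.inl (.inl ⟨a, rfl⟩))
    · exact eq_neg_of_add_eq_zero_right (by simpa using h _ (.inl (.inr ⟨(a, b), rfl⟩)))
    · by_contra! hs
      obtain ⟨f, g, hfg⟩ := exists_submatrix_det_ne_zero_of_le_rank _ hs
      exact hfg ((hminor f g).symm.trans (h _ (.inr ⟨(f, g), rfl⟩)))
  · rintro ⟨halt, hrank⟩ _ ((⟨a, rfl⟩ | ⟨e, rfl⟩) | ⟨fg, rfl⟩)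
    · simpa using halt.apply_self a
    · have hswap : x e.swap = -x e := halt.apply_swap e.1 e.2
      simp [hswap]
    · by_contra hne
      rw [hminor] at hne
      have hle := rank_submatrix_le (of x.curry) fg.1 fg.2
      rw [rank_of_det_ne_zero hne, Fintype.card_fin] at hle
      lia

lemma choose_two_add_mul_le_finrank_of_isAltMatrix {K H : Type*} [Field K] [IsAlgClosed K]
    [AddCommGroup H] [Module K H] [FiniteDimensional K H] {r m : ℕ}
    (L : Matrix (Fin (2 * r) ⊕ Fin m) (Fin (2 * r) ⊕ Fin m) K →ₗ[K] H)
    (hL : ∀ S, IsAltMatrix S → S.rank ≤ 2 * r → L S = 0 → S = 0) :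
    (2 * r).choose 2 + 2 * r * m ≤ finrank K H := by
  let P := MvPolynomial (FreeEntry r m) K
  have hX : AlgebraicIndependent K (algebraMap P (FractionRing P) ∘ X) :=
    (algebraicIndependent_X (FreeEntry r m) K).map' (f := Algebra.algHom K P (FractionRing P))
      (IsFractionRing.injective P (FractionRing P))
  obtain ⟨W, hW, hrank, hpos⟩ := exists_isAltMatrix_of_algebraicIndependent hX
  let n := Fin (2 * r) ⊕ Fin m
  let ofUncurried : (n × n → K) →ₗ[K] Matrix n n K :=
    (Matrix.ofLinearEquiv K).toLinearMap ∘ₗ (LinearEquiv.curry K K n n).toLinearMap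
  rw [← card_freeEntry]
  refine card_le_finrank_of_forall_aeval_eq_zero (z := Function.uncurry W) (e := FreeEntry.pos)
    isHomogeneousElem_of_mem_altRankEquations (L ∘ₗ ofUncurried) (fun x hx hLx => ?_)
    (forall_aeval_altRankEquations_eq_zero_iff.2 ⟨hW, Nat.lt_succ_of_le hrank⟩) ?_
  · obtain ⟨halt, hlt⟩ := forall_aeval_altRankEquations_eq_zero_iff.1 hx
    have hzero := hL _ halt (Nat.le_of_lt_succ hlt) hLx
    ext e
    exact congrFun₂ hzero e.1 e.2
  · rwa [show Function.uncurry W ∘ FreeEntry.pos = _ from funext hpos]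

end RankLocus

end AlternatingMatrices

section Bivectors

open Matrix

variable {K V : Type*} [Field K] [AddCommGroup V] [Module K V]

/-- A bivector is a sum of `k` decomposable ones, that is, it has rank at most `2k`. -/
def IsSumOfWedges (k : ℕ) (ω : ⋀[K]^2 V) : Prop :=
  ∃ x y : Fin k → V, ω = ∑ i, exteriorPower.ιMulti K 2 ![x i, y i]

lemma IsSumOfWedges.mono {j k : ℕ} (hjk : j ≤ k) {ω : ⋀[K]^2 V} (hω : IsSumOfWedges j ω) :
    IsSumOfWedges k ω := by
  obtain ⟨x, y, rfl⟩ := hω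
  obtain ⟨i, rfl⟩ := Nat.exists_eq_add_of_le hjk
  refine ⟨Fin.append x 0, Fin.append y 0, ?_⟩
  have hzero : exteriorPower.ιMulti K 2 ![(0 : V), 0] = 0 :=
    (exteriorPower.ιMulti K 2).map_coord_zero 0 rfl
  simp [Fin.sum_univ_add, hzero]

/-- The alternating matrix of coordinates of a bivector in a basis of `V`. -/
noncomputable def bivectorMatrix {n : Type*} (b : Basis n K V) : ⋀[K]^2 V →ₗ[K] Matrix n n K :=
  (ofLinearEquiv K).toLinearMap ∘ₗ LinearMap.pi fun c => LinearMap.pi fun d =>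
    exteriorPower.pairingDual K V 2 (exteriorPower.ιMulti K 2 ![b.coord c, b.coord d])

section BivectorMatrix

variable {n : Type*} (b : Basis n K V)

lemma bivectorMatrix_apply (ω : ⋀[K]^2 V) (c d : n) :
    bivectorMatrix b ω c d =
      exteriorPower.pairingDual K V 2 (exteriorPower.ιMulti K 2 ![b.coord c, b.coord d]) ω :=
  rfl

lemma bivectorMatrix_ιMulti (x y : V) :
    bivectorMatrix b (exteriorPower.ιMulti K 2 ![x, y]) = wedgeMatrix (b.repr x) (b.repr y) := by
  ext c d
  simp [bivectorMatrix_apply, exteriorPower.pairingDual_ιMulti_ιMulti, det_fin_two,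
    wedgeMatrix_apply, mul_comm]

lemma bivectorMatrix_injective : Function.Injective (bivectorMatrix b) := by
  classical
  let : LinearOrder n := linearOrderOfSTO WellOrderingRel
  refine (injective_iff_map_eq_zero _).2 fun ω hω => (b.exteriorPower 2).repr.injective ?_
  ext s
  let f := Set.powersetCard.ofFinEmbEquiv.symm s
  have hcoord : b.coord ∘ f = ![b.coord (f 0), b.coord (f 1)] := by
    ext i
    fin_cases i <;> rfl
  rw [exteriorPower.basis_repr_apply, map_zero, Finsupp.zero_apply, exteriorPower.ιMultiDual,
    exteriorPower.ιMulti_family, hcoord]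
  exact congrFun₂ hω (f 0) (f 1)

end BivectorMatrix

lemma IsAltMatrix.exists_bivectorMatrix_eq {n : Type*} [Fintype n] (b : Basis n K V)
    {S : Matrix n n K} (hS : IsAltMatrix S) {k : ℕ} (hk : S.rank ≤ 2 * k) :
    ∃ ω : ⋀[K]^2 V, IsSumOfWedges k ω ∧ bivectorMatrix b ω = S := by
  obtain ⟨u, v, rfl⟩ := hS.exists_eq_sum_wedgeMatrix hk
  refine ⟨_, ⟨fun i => b.equivFun.symm (u i), fun i => b.equivFun.symm (v i), rfl⟩, ?_⟩
  simp only [map_sum, bivectorMatrix_ιMulti, ← b.equivFun_apply, LinearEquiv.apply_symm_apply]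

lemma choose_two_add_mul_le_finrank_of_isSumOfWedges [IsAlgClosed K] [FiniteDimensional K V]
    {H : Type*} [AddCommGroup H] [Module K H] [FiniteDimensional K H] {r m : ℕ}
    (hV : finrank K V = 2 * r + m) (ψ : ⋀[K]^2 V →ₗ[K] H)
    (hψ : ∀ ω, IsSumOfWedges r ω → ψ ω = 0 → ω = 0) :
    (2 * r).choose 2 + 2 * r * m ≤ finrank K H := by
  let b := (finBasisOfFinrankEq K V hV).reindex finSumFinEquiv.symm
  obtain ⟨f, hf⟩ := (bivectorMatrix b).exists_leftInverse_of_injective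
    (LinearMap.ker_eq_bot.2 (bivectorMatrix_injective b))
  refine choose_two_add_mul_le_finrank_of_isAltMatrix (ψ ∘ₗ f) fun S hS hrank hzero => ?_
  obtain ⟨ω, hω, rfl⟩ := hS.exists_bivectorMatrix_eq b hrank
  rw [LinearMap.comp_apply, ← LinearMap.comp_apply f, hf] at hzero
  rw [hψ ω hω hzero, map_zero]

end Bivectors

lemma wedge_eq_ιMulti {V : Type*} [AddCommGroup V] [Module ℂ V] (x y : V) :
    wedge x y = exteriorPower.ιMulti ℂ 2 ![x, y] := by
  apply Subtype.ext
  simp [wedge, ExteriorAlgebra.ιMulti_apply]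

theorem stmt1_general {K V H : Type*} [Field K] [IsAlgClosed K] [AddCommGroup V] [Module K V]
    [FiniteDimensional K V] [AddCommGroup H] [Module K H] [FiniteDimensional K H]
    (ψ : ⋀[K]^2 V →ₗ[K] H) (r : ℕ) (hψ : ∀ ω, IsSumOfWedges r ω → ψ ω = 0 → ω = 0) :
    (2 * r * finrank K V : ℤ) - ((2 * r + 1).choose 2 : ℤ) ≤ (finrank K H : ℤ) := by
  -- When `2r > dim V`, the claim for `r` follows from the one for `s = ⌊dim V / 2⌋`.
  obtain ⟨s, j, m, rfl, hV, hjm⟩ :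
      ∃ s j m, r = s + j ∧ finrank K V = 2 * s + m ∧ (j = 0 ∨ m ≤ j) := by
    rcases le_total (2 * r) (finrank K V) with h | h
    · exact ⟨r, 0, finrank K V - 2 * r, by lia, by lia, .inl rfl⟩
    · exact ⟨finrank K V / 2, r - finrank K V / 2, finrank K V % 2, by lia, by lia, by lia⟩
  have hdim := choose_two_add_mul_le_finrank_of_isSumOfWedges hV ψ fun ω hω =>
    hψ ω (hω.mono (Nat.le_add_right s j))
  have hloss : 0 ≤ (j : ℤ) * (2 * j + 1 - 2 * m) := by
    rcases hjm with rfl | hm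
    · simp
    · exact mul_nonneg (by lia) (by lia)
  rw [hV]
  qify at hdim hloss ⊢
  push_cast [Nat.cast_choose_two] at hdim ⊢
  linarith

/-- **Corollary 4.4** (linear-algebra content): if `ψ : ⋀²V → H` is a linear map of
finite-dimensional complex vector spaces, `dim V = q`, `1 ≤ k`, `2k ≤ q`, and no non-zero
element of `ker ψ` is a sum of at most `k` decomposable bivectors (i.e. every non-zero element
of `ker ψ` has rank bigger than `2k`), then `dim H ≥ 2rq - C(2r+1, 2)` for all `1 ≤ r ≤ k`. -/
theorem stmt1 {V H : Type*} [AddCommGroup V] [Module ℂ V] [FiniteDimensional ℂ V]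
    [AddCommGroup H] [Module ℂ H] [FiniteDimensional ℂ H]
    (q k : ℕ) (hq : Module.finrank ℂ V = q) (hk : 1 ≤ k) (hkq : 2 * k ≤ q)
    (ψ : (⋀[ℂ]^2 V) →ₗ[ℂ] H)
    (hker : ∀ v : ⋀[ℂ]^2 V, ψ v = 0 → v ≠ 0 →
      ¬ ∃ x y : Fin k → V, v = ∑ i, wedge (x i) (y i)) :
    ∀ r : ℕ, 1 ≤ r → r ≤ k →
      (2 * r * q : ℤ) - ((2 * r + 1).choose 2 : ℤ) ≤ (Module.finrank ℂ H : ℤ) := by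
  subst hq
  simp only [wedge_eq_ιMulti] at hker
  exact fun r _ hrk => stmt1_general ψ r fun ω hω hzero =>
    by_contra fun hne => hker ω hzero hne (hω.mono hrk)
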